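/- arXiv:2308.15732 — 2 statements merged into one kernel-verified Lean document; each statement's English description precedes it below -/
import Mathlib

section
/- (Exponential bound on the destabilizing effect of the spoofed mode of the average dynamics.) Let n ≥ 1, let J : ℝⁿ → ℝ be differentiable with a global minimizer x* ∈ ℝⁿ, and suppose ∇J is L_J-Lipschitz for some L_J > 0. Let P : ℝⁿ → ℝ^{n×n} be continuous with operator norm ‖P(x)‖ ≤ M_P for all x ∈ ℝⁿ, for some M_P > 0. Let T > 0 and let x : [0, T] → ℝⁿ be differentiable with x′(t) = P(x(t))∇J(x(t)) for all t ∈ [0, T]. Then J(x(t)) − J(x*) ≤ e^{2 M_P L_J t} (J(x(0)) − J(x*)) for all t ∈ [0, T]. -/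
theorem grad_sq_le {E : Type*} [NormedAddCommGroup E] [InnerProductSpace ℝ E] [CompleteSpace E]
    (LJ : ℝ) (hLJ : 0 < LJ) (J : E → ℝ)
    (hJdiff : ∀ x, DifferentiableAt ℝ J x)
    (hJlip : ∀ x y, ‖gradient J x - gradient J y‖ ≤ LJ * ‖x - y‖)
    (xs : E) (hxs : ∀ x, J xs ≤ J x) (x : E) :
    ‖gradient J x‖ ^ 2 ≤ 2 * LJ * (J x - J xs) := by
  set g := gradient J x with hg
  have hd : ∀ s : ℝ, HasDerivAt (fun s : ℝ => J (x - s • g) + s * ‖g‖ ^ 2 - LJ / 2 * ‖g‖ ^ 2 * s ^ 2)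
      (- inner ℝ (gradient J (x - s • g)) g + ‖g‖ ^ 2 - LJ * ‖g‖ ^ 2 * s) s := by
    intro s
    have h1 : HasDerivAt (fun s : ℝ => x - s • g) (-((1:ℝ) • g)) s :=
      ((hasDerivAt_id s).smul_const g).const_sub x
    have h2 := (hJdiff (x - s • g)).hasGradientAt.hasFDerivAt.comp_hasDerivAt s h1
    have h3 : HasDerivAt (fun s : ℝ => s * ‖g‖ ^ 2) (1 * ‖g‖ ^ 2) s :=
      (hasDerivAt_id s).mul_const _
    have h4 : HasDerivAt (fun s : ℝ => LJ / 2 * ‖g‖ ^ 2 * s ^ 2) _ s :=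
      (hasDerivAt_pow 2 s).const_mul _
    refine ((h2.add h3).sub h4).congr_deriv ?_
    simp
    ring
  have hanti : AntitoneOn (fun s : ℝ => J (x - s • g) + s * ‖g‖ ^ 2 - LJ / 2 * ‖g‖ ^ 2 * s ^ 2)
      (Set.Ici 0) := by
    apply antitoneOn_of_deriv_nonpos (convex_Ici 0)
    · exact fun s _ => (hd s).continuousAt.continuousWithinAt
    · exact fun s _ => (hd s).differentiableAt.differentiableWithinAt
    · intro s hs
      rw [interior_Ici] at hs
      have hs : 0 < s := hs
      rw [(hd s).deriv]
      have h1 : inner ℝ (g - gradient J (x - s • g)) g ≤ ‖g - gradient J (x - s • g)‖ * ‖g‖ :=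
        real_inner_le_norm _ _
      have h2 := hJlip x (x - s • g)
      rw [sub_sub_cancel, norm_smul, Real.norm_of_nonneg hs.le, ← hg] at h2
      rw [inner_sub_left, real_inner_self_eq_norm_sq] at h1
      nlinarith [mul_le_mul_of_nonneg_right h2 (norm_nonneg g)]
  have h := hanti (Set.self_mem_Ici) (show LJ⁻¹ ∈ Set.Ici (0:ℝ) from (inv_pos.2 hLJ).le)
    (inv_pos.2 hLJ).le
  have h' := hxs (x - LJ⁻¹ • g)
  simp only [zero_smul, sub_zero] at h
  have e : LJ⁻¹ * ‖g‖ ^ 2 - LJ / 2 * ‖g‖ ^ 2 * LJ⁻¹ ^ 2 = ‖g‖ ^ 2 / (2 * LJ) := by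
    field_simp
    ring
  have h5 : ‖g‖ ^ 2 / (2 * LJ) ≤ J x - J xs := by rw [← e]; linarith
  rw [div_le_iff₀ (by positivity)] at h5
  linarith

/-- Exponential bound on the destabilizing effect of the spoofed mode of the average
dynamics: along solutions of `x′ = +P(x)∇J(x)` with `∇J` `L_J`-Lipschitz, `x*` a
global minimizer, and `‖P(x)‖ ≤ M_P`, the suboptimality grows at most like
`e^{2 M_P L_J t}`. -/
theorem stmt12 (n : ℕ) (hn : 1 ≤ n) (LJ MP : ℝ) (hLJ : 0 < LJ) (hMP : 0 < MP)
    (J : EuclideanSpace ℝ (Fin n) → ℝ)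
    (hJdiff : ∀ x, DifferentiableAt ℝ J x)
    (hJlip : ∀ x y, ‖gradient J x - gradient J y‖ ≤ LJ * ‖x - y‖)
    (xs : EuclideanSpace ℝ (Fin n)) (hxs : ∀ x, J xs ≤ J x)
    (P : EuclideanSpace ℝ (Fin n) →
      EuclideanSpace ℝ (Fin n) →L[ℝ] EuclideanSpace ℝ (Fin n))
    (hPcont : Continuous P)
    (hPnorm : ∀ x, ‖P x‖ ≤ MP)
    (T : ℝ) (hT : 0 < T)
    (x : ℝ → EuclideanSpace ℝ (Fin n))
    (hx : ∀ t ∈ Set.Icc (0:ℝ) T,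
      HasDerivAt x (P (x t) (gradient J (x t))) t) :
    ∀ t ∈ Set.Icc (0:ℝ) T,
      J (x t) - J xs ≤ Real.exp (2 * MP * LJ * t) * (J (x 0) - J xs) := by
  have hd : ∀ t ∈ Set.Icc (0:ℝ) T, HasDerivAt
      (fun t => Real.exp (-(2 * MP * LJ * t)) * (J (x t) - J xs))
      (Real.exp (-(2 * MP * LJ * t)) * (-(2 * MP * LJ)) * (J (x t) - J xs) +
        Real.exp (-(2 * MP * LJ * t)) *
          inner ℝ (gradient J (x t)) (P (x t) (gradient J (x t)))) t := by
    intro t ht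
    have h1 := (hJdiff (x t)).hasGradientAt.hasFDerivAt.comp_hasDerivAt t (hx t ht)
    have h2 : HasDerivAt (fun t : ℝ => -(2 * MP * LJ * t)) (-(2 * MP * LJ)) t := by
      exact ((hasDerivAt_id t).const_mul (2 * MP * LJ)).neg.congr_deriv (by simp)
    refine (h2.exp.mul (h1.sub_const (J xs))).congr_deriv ?_
    simp
  have hanti : AntitoneOn (fun t => Real.exp (-(2 * MP * LJ * t)) * (J (x t) - J xs))
      (Set.Icc 0 T) := by
    apply antitoneOn_of_deriv_nonpos (convex_Icc 0 T)
    · exact fun s hs => (hd s hs).continuousAt.continuousWithinAt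
    · exact fun s hs => (hd s (interior_subset hs)).differentiableAt.differentiableWithinAt
    · intro s hs
      rw [(hd s (interior_subset hs)).deriv]
      have h1 := real_inner_le_norm (gradient J (x s)) (P (x s) (gradient J (x s)))
      have h2 := (P (x s)).le_of_opNorm_le (hPnorm (x s)) (gradient J (x s))
      have h3 := grad_sq_le LJ hLJ J hJdiff hJlip xs hxs (x s)
      have h4 := mul_le_mul_of_nonneg_left h2 (norm_nonneg (gradient J (x s)))
      have h5 := mul_le_mul_of_nonneg_left h3 hMP.le
      have h6 : inner ℝ (gradient J (x s)) (P (x s) (gradient J (x s)))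
          - 2 * MP * LJ * (J (x s) - J xs) ≤ 0 := by nlinarith
      have h7 := mul_nonpos_of_nonneg_of_nonpos (Real.exp_pos (-(2 * MP * LJ * s))).le h6
      linarith
  intro t ht
  have h := hanti (Set.left_mem_Icc.2 hT.le) ht ht.1
  simp only [mul_zero, neg_zero, Real.exp_zero, one_mul] at h
  have h' := mul_le_mul_of_nonneg_left h (Real.exp_pos (2 * MP * LJ * t)).le
  rwa [← mul_assoc, ← Real.exp_add, add_neg_cancel, Real.exp_zero, one_mul] at h'
end

section
/- (Second-order average of the model-free synchronization dynamics is the Kuramoto vector field, equation (45).) Let r ≥ 2, T₂ > 0, and let w₁, …, w_r be pairwise distinct positive reals with w_i T₂ ∈ 2π·ℤ_{>0} for every i. Let α₁, …, α_r ∈ {−1, +1}, and for each i let 𝒩_i ⊆ {1, …, r} \ {i}. Define J_i(ξ) := Σ_{j∈𝒩_i} (1 − cos(ξ_i − ξ_j)) for ξ ∈ ℝ^r, define φ₁ : ℝ^r × ℝ → ℝ^r componentwise by (φ₁)_i(ξ, τ₂) := α_i √(2w_i) cos(w_i τ₂ + J_i(ξ)), and u₁(ξ, τ₂) := ∫₀^{τ₂}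 φ₁(ξ, s) ds. Then for every ξ ∈ ℝ^r and every i ∈ {1, …, r}, the i-th component of (1/T₂) ∫₀^{T₂} (1/2)[u₁, φ₁]_ξ(ξ, τ₂) dτ₂ equals −Σ_{j∈𝒩_i} sin(ξ_i − ξ_j); equivalently, the second-order average of the closed-loop dynamics ξ̇_i = 1 + α_i (φ₁)_i(ξ, t/ε²)/ε is ξ̄̇_i = 1 − Σ_{j∈𝒩_i} sin(ξ̄_i − ξ̄_j), independently of the unknown control directions α_i. -/
open MeasureTheory

lemma aux_comp {r : ℕ} (f : ℝ → EuclideanSpace ℝ (Fin r)) (hf : ∀ i, Continuous fun t => f t i)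
    (a b : ℝ) (i : Fin r) : (∫ t in a..b, f t) i = ∫ t in a..b, f t i := by
  have hc : Continuous f := by
    have h1 : Continuous fun t => WithLp.toLp 2 (fun i => f t i) :=
      (PiLp.continuous_toLp 2 _).comp (continuous_pi hf)
    exact h1
  have := (EuclideanSpace.proj i : EuclideanSpace ℝ (Fin r) →L[ℝ] ℝ).intervalIntegral_comp_comm
    (hc.intervalIntegrable (μ := volume) a b)
  exact this.symm

lemma aux_int_cos (a b t : ℝ) (ha : a ≠ 0) :
    ∫ s in (0:ℝ)..t, Real.cos (a * s + b) = (Real.sin (a * t + b) - Real.sin b) / a := by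
  rw [intervalIntegral.integral_comp_mul_add _ ha]
  simp [div_eq_inv_mul]

lemma aux_per_cos (a b t : ℝ) (ha : a ≠ 0) (n : ℤ) (h : a * t = 2 * Real.pi * n) :
    ∫ s in (0:ℝ)..t, Real.cos (a * s + b) = 0 := by
  rw [aux_int_cos a b t ha, h, show 2 * Real.pi * n + b = b + n * (2 * Real.pi) by ring,
    Real.sin_add_int_mul_two_pi]
  simp

lemma aux_per_sin (a b t : ℝ) (ha : a ≠ 0) (n : ℤ) (h : a * t = 2 * Real.pi * n) :
    ∫ s in (0:ℝ)..t, Real.sin (a * s + b) = 0 := by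
  have h0 := aux_per_cos a (b - Real.pi / 2) t ha n h
  simpa only [← add_sub_assoc, Real.cos_sub_pi_div_two] using h0

/-- pair integrand -/
noncomputable def auxB (c d a b p q : ℝ) (s : ℝ) : ℝ :=
  -(c * Real.sin (a * s + p)) * (d * ((Real.sin (b * s + q) - Real.sin q) / b))
    - c * ((Real.cos (a * s + p) - Real.cos p) / a) * (d * Real.cos (b * s + q))

lemma auxB_cont (c d a b p q : ℝ) : Continuous (auxB c d a b p q) := by
  unfold auxB; fun_prop

lemma auxB_eq (c d a b p q s : ℝ) (ha : a ≠ 0) (hb : b ≠ 0) : auxB c d a b p q s =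
    c * d / 2 * (1 / b - 1 / a) * Real.cos ((a + b) * s + (p + q))
    - c * d / 2 * (1 / b + 1 / a) * Real.cos ((a - b) * s + (p - q))
    + c * d * Real.sin q / b * Real.sin (a * s + p)
    + c * d * Real.cos p / a * Real.cos (b * s + q) := by
  rw [show (a + b) * s + (p + q) = (a * s + p) + (b * s + q) by ring,
    show (a - b) * s + (p - q) = (a * s + p) - (b * s + q) by ring, Real.cos_add, Real.cos_sub]
  unfold auxB
  field_simp
  ring

lemma auxB_int (c d a b p q t : ℝ) (ha : 0 < a) (hb : 0 < b) (m n : ℤ)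
    (hm : a * t = 2 * Real.pi * m) (hn : b * t = 2 * Real.pi * n) :
    ∫ s in (0:ℝ)..t, auxB c d a b p q s =
      - (c * d / 2 * (1 / b + 1 / a) * ∫ s in (0:ℝ)..t, Real.cos ((a - b) * s + (p - q))) := by
  simp_rw [auxB_eq c d a b p q _ ha.ne' hb.ne']
  rw [intervalIntegral.integral_add, intervalIntegral.integral_add, intervalIntegral.integral_sub]
  · simp_rw [intervalIntegral.integral_const_mul]
    rw [aux_per_cos (a + b) (p + q) t (by positivity) (m + n) (by push_cast; linear_combination hm + hn),
      aux_per_sin a p t ha.ne' m hm, aux_per_cos b q t hb.ne' n hn]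
    ring
  all_goals exact Continuous.intervalIntegrable (by fun_prop) _ _

/-- Second-order average of the model-free synchronization dynamics is the Kuramoto
vector field, equation (45): the `i`-th component of the `τ₂`-average of
`(1/2)[u₁, φ₁]_ξ` equals `−Σ_{j∈𝒩ᵢ} sin(ξᵢ − ξⱼ)`, independently of the unknown
control directions `αᵢ ∈ {−1, +1}`. -/
theorem stmt14 (r : ℕ) (hr : 2 ≤ r) (T₂ : ℝ) (hT₂ : 0 < T₂)
    (w : Fin r → ℝ) (hw_pos : ∀ i, 0 < w i) (hw_inj : Function.Injective w)
    (hw_per : ∀ i, ∃ m : ℕ, 0 < m ∧ w i * T₂ = 2 * Real.pi * m)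
    (α : Fin r → ℝ) (hα : ∀ i, α i = 1 ∨ α i = -1)
    (𝒩 : Fin r → Finset (Fin r)) (h𝒩 : ∀ i, i ∉ 𝒩 i)
    (Jf : Fin r → EuclideanSpace ℝ (Fin r) → ℝ)
    (hJf : ∀ i ξ, Jf i ξ = ∑ j ∈ 𝒩 i, (1 - Real.cos (ξ i - ξ j)))
    (φ₁ : EuclideanSpace ℝ (Fin r) → ℝ → EuclideanSpace ℝ (Fin r))
    (u₁ : EuclideanSpace ℝ (Fin r) → ℝ → EuclideanSpace ℝ (Fin r))
    (hφ₁ : ∀ ξ τ₂ i, φ₁ ξ τ₂ i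
      = α i * Real.sqrt (2 * w i) * Real.cos (w i * τ₂ + Jf i ξ))
    (hu₁ : ∀ ξ τ₂, u₁ ξ τ₂ = ∫ s in (0:ℝ)..τ₂, φ₁ ξ s) :
    ∀ (ξ : EuclideanSpace ℝ (Fin r)) (i : Fin r),
      ((1 / T₂) • (∫ τ₂ in (0:ℝ)..T₂,
        (1/2 : ℝ) • ((fderiv ℝ (fun y => φ₁ y τ₂) ξ) (u₁ ξ τ₂)
          - (fderiv ℝ (fun y => u₁ y τ₂) ξ) (φ₁ ξ τ₂)))) i
      = -(∑ j ∈ 𝒩 i, Real.sin (ξ i - ξ j)) := by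
  intro ξ i
  set c : Fin r → ℝ := fun i => α i * Real.sqrt (2 * w i) with hc
  have hcc : ∀ i, c i * c i = 2 * w i := by
    intro i
    have h1 := Real.mul_self_sqrt (show 0 ≤ 2 * w i by linarith [hw_pos i])
    have h2 : α i * α i = 1 := by rcases hα i with h | h <;> simp [h]
    simp only [hc]
    linear_combination α i * α i * h1 + 2 * w i * h2
  have hφ : ∀ y t i, φ₁ y t i = c i * Real.cos (w i * t + Jf i y) := hφ₁
  have hu : ∀ y t i, u₁ y t i
      = c i * ((Real.sin (w i * t + Jf i y) - Real.sin (Jf i y)) / w i) := by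
    intro y t i
    rw [hu₁, aux_comp _ (fun i => by simp_rw [hφ]; fun_prop)]
    simp_rw [hφ]
    rw [intervalIntegral.integral_const_mul, aux_int_cos _ _ _ (hw_pos i).ne']
  let P : Fin r → (EuclideanSpace ℝ (Fin r) →L[ℝ] ℝ) :=
    fun i => EuclideanSpace.proj i
  have hP : ∀ k v, P k v = v k := fun k v => rfl
  let L : Fin r → (EuclideanSpace ℝ (Fin r) →L[ℝ] ℝ) :=
    fun i => ∑ j ∈ 𝒩 i, Real.sin (ξ i - ξ j) • (P i - P j)
  have hL : ∀ i, HasFDerivAt (Jf i) (L i) ξ := by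
    intro i
    rw [show Jf i = fun y => ∑ j ∈ 𝒩 i, (1 - Real.cos (y i - y j)) from funext (hJf i)]
    refine HasFDerivAt.fun_sum fun j _ => ?_
    have h1 : HasFDerivAt (fun y : EuclideanSpace ℝ (Fin r) => y i - y j) (P i - P j) ξ :=
      (P i).hasFDerivAt.sub (P j).hasFDerivAt
    have h2 := h1.cos.const_sub 1
    refine h2.congr_fderiv ?_
    ext v
    simp only [ContinuousLinearMap.neg_apply, ContinuousLinearMap.smul_apply, smul_eq_mul]
    ring
  have hLv : ∀ i v, L i v = ∑ j ∈ 𝒩 i, Real.sin (ξ i - ξ j) * (v i - v j) := by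
    intro i v
    simp [L, ContinuousLinearMap.sum_apply, hP]
  have key : ∀ (f : EuclideanSpace ℝ (Fin r) → EuclideanSpace ℝ (Fin r))
      (g : Fin r → ℝ), (∀ k, HasFDerivAt (fun y => f y k) (g k • L k) ξ) →
      ∀ v k, (fderiv ℝ f ξ v) k = g k * L k v := by
    intro f g h v k
    have hd : DifferentiableAt ℝ f ξ := by
      rw [differentiableAt_euclidean]
      exact fun k => (h k).differentiableAt
    have h1 : HasFDerivAt (fun y => f y k) ((P k).comp (fderiv ℝ f ξ)) ξ :=
      (P k).hasFDerivAt.comp ξ hd.hasFDerivAt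
    have h2 := h1.unique (h k)
    have := congrArg (fun A : EuclideanSpace ℝ (Fin r) →L[ℝ] ℝ => A v) h2
    simpa [hP] using this
  have hdφ : ∀ t v k, (fderiv ℝ (fun y => φ₁ y t) ξ v) k
      = -(c k * Real.sin (w k * t + Jf k ξ)) * L k v := by
    intro t v k
    refine key (fun y => φ₁ y t) (fun k => -(c k * Real.sin (w k * t + Jf k ξ))) (fun k => ?_) v k
    simp_rw [hφ]
    have h := (((hL k).const_add (w k * t)).cos).const_mul (c k)
    refine h.congr_fderiv ?_
    ext v
    simp only [ContinuousLinearMap.smul_apply, smul_eq_mul]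
    ring
  have hdu : ∀ t v k, (fderiv ℝ (fun y => u₁ y t) ξ v) k
      = c k * ((Real.cos (w k * t + Jf k ξ) - Real.cos (Jf k ξ)) / w k) * L k v := by
    intro t v k
    refine key (fun y => u₁ y t)
      (fun k => c k * ((Real.cos (w k * t + Jf k ξ) - Real.cos (Jf k ξ)) / w k)) (fun k => ?_) v k
    simp_rw [hu, div_eq_mul_inv]
    have h := (((((hL k).const_add (w k * t)).sin).sub (hL k).sin).mul_const (w k)⁻¹).const_mul (c k)
    refine h.congr_fderiv ?_
    ext v
    simp only [ContinuousLinearMap.smul_apply, ContinuousLinearMap.sub_apply, smul_eq_mul]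
    ring
  have hcomp : ∀ t k, ((1/2 : ℝ) • ((fderiv ℝ (fun y => φ₁ y t) ξ) (u₁ ξ t)
          - (fderiv ℝ (fun y => u₁ y t) ξ) (φ₁ ξ t))) k
      = ∑ j ∈ 𝒩 k, Real.sin (ξ k - ξ j) / 2 *
        (auxB (c k) (c k) (w k) (w k) (Jf k ξ) (Jf k ξ) t
          - auxB (c k) (c j) (w k) (w j) (Jf k ξ) (Jf j ξ) t) := by
    intro t k
    rw [PiLp.smul_apply, PiLp.sub_apply, hdφ, hdu, hLv, hLv, smul_eq_mul, Finset.mul_sum,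
      Finset.mul_sum, ← Finset.sum_sub_distrib, Finset.mul_sum]
    refine Finset.sum_congr rfl fun j _ => ?_
    rw [hu, hu, hφ, hφ]
    unfold auxB
    ring
  rw [PiLp.smul_apply, aux_comp]
  swap
  · intro k
    simp_rw [hcomp]
    have := auxB_cont
    fun_prop
  simp_rw [hcomp]
  rw [intervalIntegral.integral_finset_sum]
  swap
  · intro j _
    have := auxB_cont
    exact Continuous.intervalIntegrable (by fun_prop) _ _
  rw [smul_eq_mul, Finset.mul_sum, ← Finset.sum_neg_distrib]
  refine Finset.sum_congr rfl fun j hj => ?_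
  have hij : i ≠ j := fun h => h𝒩 i (h ▸ hj)
  obtain ⟨m, -, hm⟩ := hw_per i
  obtain ⟨n, -, hn⟩ := hw_per j
  have hwi := hw_pos i
  rw [intervalIntegral.integral_const_mul, intervalIntegral.integral_sub
    ((auxB_cont _ _ _ _ _ _).intervalIntegrable _ _)
    ((auxB_cont _ _ _ _ _ _).intervalIntegrable _ _),
    auxB_int _ _ _ _ _ _ _ hwi hwi m m (by simpa using hm) (by simpa using hm),
    auxB_int _ _ _ _ _ _ _ hwi (hw_pos j) m n (by simpa using hm) (by simpa using hn),
    aux_per_cos (w i - w j) _ T₂ (sub_ne_zero.2 fun h => hij (hw_inj h)) (m - n)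
      (by push_cast; linear_combination hm - hn), hcc]
  simp
  field_simp
  try ring
end
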